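/- arXiv:1504.03389 — 3 statements merged into one kernel-verified Lean document; each statement's English description precedes it below -/
import Mathlib

section
/- Under the point-mass contaminated model F = (1−ε)F₀ + ε δ_{K e₁}, for every unit vector u ∈ ℝ^p with s = u₁² (u₁ the first coordinate of u), the fourth central moment of the projection y = ⟨u, x⟩ under F equals a + b s K² + c s² K⁴, where a = (1−ε)A, b = 6ε²(1−ε), and c = ε(1 − 4ε + 6ε² − 3ε³). -/
open MeasureTheory
open scoped RealInnerProductSpace ENNReal

/-! Since `F₀` is rotation invariant, the law of `⟪u, x⟫` under `F₀` is symmetric and depends only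
on `‖u‖`. Contamination at `z` moves the mean from `0` to `m = ε⟪u, z⟫`, so the fourth central
moment is `(1 - ε) E₀(⟪u, x⟫ - m)⁴ + ε((1 - ε)⟪u, z⟫)⁴`, and the odd terms of the binomial expansion
of the first summand vanish. -/

section RandomVariable

open ProbabilityTheory

variable {Ω : Type*} [MeasurableSpace Ω] {μ : Measure Ω} {X : Ω → ℝ} {n : ℕ}

theorem integrable_pow_of_memLp [IsFiniteMeasure μ] (hX : MemLp X n μ) {k : ℕ} (hk : k ≤ n) :
    Integrable (fun ω => X ω ^ k) μ := by
  have hXk : MemLp X k μ := hX.mono_exponent (by exact_mod_cast hk)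
  refine (integrable_norm_iff (hXk.aestronglyMeasurable.pow k)).mp ?_
  simpa only [Pi.pow_apply, norm_pow] using hXk.integrable_norm_pow'

theorem integrable_sub_const_pow [IsFiniteMeasure μ] (hX : MemLp X n μ) (c : ℝ) :
    Integrable (fun ω => (X ω - c) ^ n) μ :=
  integrable_pow_of_memLp (hX.sub (memLp_const c)) le_rfl

theorem integral_sub_const_pow [IsFiniteMeasure μ] (hX : MemLp X n μ) (c : ℝ) :
    ∫ ω, (X ω - c) ^ n ∂μ =
      ∑ k ∈ Finset.range (n + 1), moment X k μ * (-c) ^ (n - k) * n.choose k := by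
  simp only [sub_eq_add_neg, add_pow]
  rw [integral_finsetSum]
  · simp only [integral_mul_const, moment_def, Pi.pow_apply]
  · intro k hk
    exact ((integrable_pow_of_memLp hX (Finset.mem_range_succ_iff.mp hk)).mul_const _).mul_const _

/-- The contaminated measure `(1 - ε) μ + ε δ_a`. The weights are truncated by `ENNReal.ofReal`, so
it is the intended mixture for `0 ≤ ε ≤ 1`. -/
noncomputable def contamination (μ : Measure Ω) (ε : ℝ) (a : Ω) : Measure Ω :=
  ENNReal.ofReal (1 - ε) • μ + ENNReal.ofReal ε • Measure.dirac a

variable [MeasurableSingletonClass Ω] {ε : ℝ}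

theorem integral_contamination {G : Type*} [NormedAddCommGroup G] [NormedSpace ℝ G]
    [CompleteSpace G] {f : Ω → G} (hf : Integrable f μ) (hε : ε ∈ Set.Icc 0 1) (a : Ω) :
    ∫ ω, f ω ∂(contamination μ ε a) = (1 - ε) • ∫ ω, f ω ∂μ + ε • f a := by
  have hfa : Integrable f (Measure.dirac a) := integrable_dirac (by simp)
  rw [contamination, integral_add_measure (hf.smul_measure ENNReal.ofReal_ne_top)
      (hfa.smul_measure ENNReal.ofReal_ne_top), integral_smul_measure, integral_smul_measure,
    integral_dirac, ENNReal.toReal_ofReal (sub_nonneg.mpr hε.2), ENNReal.toReal_ofReal hε.1]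

theorem centralMoment_contamination [IsFiniteMeasure μ] (hX : MemLp X n μ) (hn : 1 ≤ n)
    (hε : ε ∈ Set.Icc 0 1) (a : Ω) :
    centralMoment X n (contamination μ ε a) =
      (1 - ε) * ∫ ω, (X ω - ((1 - ε) * μ[X] + ε * X a)) ^ n ∂μ +
        ε * ((1 - ε) * (X a - μ[X])) ^ n := by
  have hmean : ∫ ω, X ω ∂(contamination μ ε a) = (1 - ε) * μ[X] + ε * X a :=
    integral_contamination (hX.integrable (by exact_mod_cast hn)) hε a
  simp only [centralMoment, Pi.pow_apply, Pi.sub_apply, hmean]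
  rw [integral_contamination (integrable_sub_const_pow hX _) hε]
  simp only [smul_eq_mul]
  ring

theorem centralMoment_four_contamination [IsProbabilityMeasure μ] (hX : MemLp X 4 μ)
    (hX1 : moment X 1 μ = 0) (hX3 : moment X 3 μ = 0) (hε : ε ∈ Set.Icc 0 1) (a : Ω) :
    centralMoment X 4 (contamination μ ε a) =
      (1 - ε) * moment X 4 μ + 6 * ε ^ 2 * (1 - ε) * moment X 2 μ * X a ^ 2 +
        ε * (1 - 4 * ε + 6 * ε ^ 2 - 3 * ε ^ 3) * X a ^ 4 := by
  have hX0 : moment X 0 μ = 1 := by simp [moment_def]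
  have hmean : μ[X] = 0 := by rwa [← moment_one]
  have hexpand : ∫ ω, (X ω - ε * X a) ^ 4 ∂μ =
      moment X 4 μ + 6 * (ε * X a) ^ 2 * moment X 2 μ + (ε * X a) ^ 4 := by
    rw [integral_sub_const_pow (n := 4) hX]
    simp only [Finset.sum_range_succ, Finset.sum_range_zero, hX0, hX1, hX3, Nat.choose]
    push_cast
    ring
  rw [centralMoment_contamination (n := 4) hX (by norm_num) hε, hmean, mul_zero, zero_add, hexpand]
  ring

end RandomVariable

section OddFunction

open ProbabilityTheory

variable {E : Type*} [MeasurableSpace E] [AddGroup E] [MeasurableNeg E] {μ : Measure E}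
  [μ.IsNegInvariant]

theorem integral_eq_zero_of_odd {G : Type*} [NormedAddCommGroup G] [NormedSpace ℝ G] {f : E → G}
    (hf : f.Odd) : ∫ x, f x ∂μ = 0 := by
  have : IsAddTorsionFree G := .of_isTorsionFree ℝ G
  have h := integral_neg_eq_self f μ
  simp only [hf _, integral_neg] at h
  exact neg_eq_self.mp h

theorem moment_eq_zero_of_odd {X : E → ℝ} (hX : X.Odd) {n : ℕ} (hn : Odd n) :
    moment X n μ = 0 :=
  integral_eq_zero_of_odd fun x => by simp only [Pi.pow_apply, hX.eq, hn.neg_pow]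

end OddFunction

section RotationInvariant

variable {E : Type*} [NormedAddCommGroup E] [NormedSpace ℝ E] [MeasurableSpace E] {μ : Measure E}

/-- Invariance of a measure under every linear isometry of the space onto itself, reflections
included; the symmetry assumed of the uncontaminated distribution. -/
def IsRotationInvariant (μ : Measure E) : Prop :=
  ∀ T : E ≃ₗᵢ[ℝ] E, μ.map T = μ

namespace IsRotationInvariant

theorem isNegInvariant (hμ : IsRotationInvariant μ) : μ.IsNegInvariant :=
  ⟨hμ (LinearIsometryEquiv.neg ℝ)⟩

theorem integral_comp [BorelSpace E] {G : Type*} [NormedAddCommGroup G] [NormedSpace ℝ G]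
    (hμ : IsRotationInvariant μ) (T : E ≃ₗᵢ[ℝ] E) (f : E → G) :
    ∫ x, f (T x) ∂μ = ∫ x, f x ∂μ :=
  MeasurePreserving.integral_comp ⟨T.continuous.measurable, hμ T⟩
    T.toHomeomorph.measurableEmbedding f

end IsRotationInvariant

end RotationInvariant

section InnerProduct

open ProbabilityTheory

variable {E : Type*} [NormedAddCommGroup E] [InnerProductSpace ℝ E] [MeasurableSpace E]
  {μ : Measure E}

theorem memLp_inner_of_integrable_norm_pow [OpensMeasurableSpace E] {n : ℕ} (hn : n ≠ 0)
    (hμ : Integrable (fun x => ‖x‖ ^ n) μ) (u : E) : MemLp (fun x => ⟪u, x⟫) n μ := by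
  have hnorm : MemLp (fun x : E => ‖x‖) n μ := by
    refine (integrable_norm_rpow_iff (by fun_prop) (by exact_mod_cast hn)
      (ENNReal.natCast_ne_top n)).mp ?_
    simpa only [norm_norm, ENNReal.toReal_natCast, Real.rpow_natCast] using hμ
  refine hnorm.of_le_mul (c := ‖u‖) (by fun_prop) (.of_forall fun x => ?_)
  simpa only [norm_norm] using norm_inner_le_norm u x

variable [BorelSpace E]

theorem IsRotationInvariant.moment_inner_eq_of_norm_eq (hμ : IsRotationInvariant μ) {u v : E}
    (huv : ‖u‖ = ‖v‖) (n : ℕ) :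
    moment (fun x => ⟪u, x⟫) n μ = moment (fun x => ⟪v, x⟫) n μ := by
  let T := (ℝ ∙ (u - v))ᗮ.reflection
  have hT : T u = v := Submodule.reflection_sub huv
  calc moment (fun x => ⟪u, x⟫) n μ
      = ∫ x, ⟪v, T x⟫ ^ n ∂μ := by
        simp only [moment_def, Pi.pow_apply, ← hT, T.inner_map_map]
    _ = moment (fun x => ⟪v, x⟫) n μ := hμ.integral_comp T fun x => ⟪v, x⟫ ^ n

theorem contaminated_projection_fourth_central_moment_general [IsProbabilityMeasure μ]
    (hrot : IsRotationInvariant μ) (hmom : Integrable (fun x => ‖x‖ ^ 4) μ) {ε : ℝ}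
    (hε : ε ∈ Set.Icc 0 1) (z : E) {u v : E} (huv : ‖u‖ = ‖v‖) :
    centralMoment (fun x => ⟪u, x⟫) 4 (contamination μ ε z) =
      (1 - ε) * moment (fun x => ⟪v, x⟫) 4 μ
        + 6 * ε ^ 2 * (1 - ε) * moment (fun x => ⟪v, x⟫) 2 μ * ⟪u, z⟫ ^ 2
        + ε * (1 - 4 * ε + 6 * ε ^ 2 - 3 * ε ^ 3) * ⟪u, z⟫ ^ 4 := by
  have := hrot.isNegInvariant
  have hX : MemLp (fun x => ⟪u, x⟫) 4 μ := memLp_inner_of_integrable_norm_pow four_ne_zero hmom u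
  have hodd : Function.Odd fun x => ⟪u, x⟫ := inner_neg_right u
  rw [centralMoment_four_contamination hX (moment_eq_zero_of_odd hodd (by decide))
      (moment_eq_zero_of_odd hodd (by decide)) hε,
    hrot.moment_inner_eq_of_norm_eq huv, hrot.moment_inner_eq_of_norm_eq huv]

end InnerProduct

/-- Under the point-mass contaminated model `F = (1−ε)F₀ + ε δ_{K e₁}`, the fourth
central moment of the projection `y = ⟪u, x⟫` of a unit vector `u` with `s = u₁²` equals
`a + b s K² + c s² K⁴`, where `a = (1−ε)A`, `b = 6ε²(1−ε)` and
`c = ε(1 − 4ε + 6ε² − 3ε³)`. -/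
theorem contaminated_projection_fourth_central_moment {p : ℕ} (hp : 0 < p)
    (F₀ : Measure (EuclideanSpace ℝ (Fin p))) [IsProbabilityMeasure F₀]
    (hrot : ∀ T : EuclideanSpace ℝ (Fin p) ≃ₗᵢ[ℝ] EuclideanSpace ℝ (Fin p),
      Measure.map (⇑T) F₀ = F₀)
    (hmom : Integrable (fun x => ‖x‖ ^ 4) F₀)
    (hcov : ∫ x, (x ⟨0, hp⟩) ^ 2 ∂F₀ = 1)
    (A : ℝ) (hA : A = ∫ x, (x ⟨0, hp⟩) ^ 4 ∂F₀)
    (ε K : ℝ) (hε : 0 < ε) (hε1 : ε < 1) (hK : 0 < K)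
    (F : Measure (EuclideanSpace ℝ (Fin p)))
    (hF : F = ENNReal.ofReal (1 - ε) • F₀ +
      ENNReal.ofReal ε • Measure.dirac (K • EuclideanSpace.single (⟨0, hp⟩ : Fin p) 1))
    (u : EuclideanSpace ℝ (Fin p)) (hu : ‖u‖ = 1) :
    ∫ x, (⟪u, x⟫ - ∫ y, ⟪u, y⟫ ∂F) ^ 4 ∂F
      = (1 - ε) * A + 6 * ε ^ 2 * (1 - ε) * (u ⟨0, hp⟩ ^ 2) * K ^ 2
        + ε * (1 - 4 * ε + 6 * ε ^ 2 - 3 * ε ^ 3) * (u ⟨0, hp⟩ ^ 2) ^ 2 * K ^ 4 := by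
  subst hA hF
  have h := contaminated_projection_fourth_central_moment_general hrot hmom ⟨hε.le, hε1.le⟩
    (K • EuclideanSpace.single ⟨0, hp⟩ 1) (v := EuclideanSpace.single ⟨0, hp⟩ 1) (by simpa using hu)
  simp only [ProbabilityTheory.moment_def, Pi.pow_apply, inner_smul_right,
    EuclideanSpace.inner_single_left, EuclideanSpace.inner_single_right, map_one, one_mul,
    conj_trivial, hcov] at h
  exact h.trans (by ring)
end

section
/- If 1/3 ≤ ε < 1/2 and A > 3/2, then the function g(s) = ((1−ε)A + 6ε²(1−ε) K² s + ε(1−4ε+6ε²−3ε³) K⁴ s²) / ((1−ε)²(1 + ε K² s)²) satisfies g′(s) < 0 for all s ≥ 0; consequently g is strictly decreasing on [0, 1]. -/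
/-!
The function `g` has the shape `(a + b s + c s²) / (p + q s)²` with `p = 1 - ε` and
`q = (1 - ε) ε K²`. For such a quotient the quadratic terms of the numerator of the derivative
cancel, leaving `((p b - 2 a q) + (2 c p - b q) s) / (p + q s)³`, whose sign on `s ≥ 0` can be read
off from the two coefficients. Since `1 - 4ε + 6ε² - 3ε³ = (1 - ε)(1 - 3ε + 3ε²)`, these are
`2ε(1 - ε)²K² (3ε - A) < 0` and `2ε(1 - ε)²K⁴ (1 - 3ε) ≤ 0`.
-/

theorem hasDerivAt_quadratic_div_affine_sq {𝕜 : Type*} [NontriviallyNormedField 𝕜]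
    (a b c : 𝕜) {p q s : 𝕜} (hs : p + q * s ≠ 0) :
    HasDerivAt (fun x ↦ (a + b * x + c * x ^ 2) / (p + q * x) ^ 2)
      ((p * b - 2 * a * q + (2 * c * p - b * q) * s) / (p + q * s) ^ 3) s := by
  have hnum : HasDerivAt (fun x ↦ a + b * x + c * x ^ 2) (b + 2 * c * s) s := by
    refine ((((hasDerivAt_id' s).const_mul b).const_add a).fun_add
      ((hasDerivAt_pow 2 s).const_mul c)).congr_deriv ?_
    push_cast
    ring
  have hden : HasDerivAt (fun x ↦ (p + q * x) ^ 2) (2 * q * (p + q * s)) s := by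
    refine ((((hasDerivAt_id' s).const_mul q).const_add p).fun_pow 2).congr_deriv ?_
    push_cast
    ring
  refine (hnum.fun_div hden (pow_ne_zero 2 hs)).congr_deriv ?_
  field_simp
  ring

section Real

variable {a b c p q : ℝ}

theorem deriv_quadratic_div_affine_sq_neg (hp : 0 < p) (hq : 0 ≤ q)
    (hconst : p * b < 2 * a * q) (hlin : 2 * c * p ≤ b * q) {s : ℝ} (hs : 0 ≤ s) :
    deriv (fun x ↦ (a + b * x + c * x ^ 2) / (p + q * x) ^ 2) s < 0 := by
  have haff : 0 < p + q * s := by positivity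
  rw [(hasDerivAt_quadratic_div_affine_sq a b c haff.ne').deriv]
  have hslope : (2 * c * p - b * q) * s ≤ 0 :=
    mul_nonpos_of_nonpos_of_nonneg (sub_nonpos.2 hlin) hs
  exact div_neg_of_neg_of_pos (by linarith) (pow_pos haff 3)

theorem strictAntiOn_quadratic_div_affine_sq (hp : 0 < p) (hq : 0 ≤ q)
    (hconst : p * b < 2 * a * q) (hlin : 2 * c * p ≤ b * q) :
    StrictAntiOn (fun x ↦ (a + b * x + c * x ^ 2) / (p + q * x) ^ 2) (Set.Ici 0) := by
  have hneg {s : ℝ} (hs : 0 ≤ s) := deriv_quadratic_div_affine_sq_neg hp hq hconst hlin hs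
  refine strictAntiOn_of_deriv_neg (convex_Ici 0) (fun s hs ↦ ?_)
    fun s hs ↦ hneg (interior_subset hs)
  exact (differentiableAt_of_deriv_ne_zero (hneg hs).ne).continuousAt.continuousWithinAt

end Real

theorem kurtosis_function_strictAnti_general {ε K A : ℝ} (hε1 : ε < 1) (hK : K ≠ 0)
    (hε3 : 1 / 3 ≤ ε) (hA : 3 * ε < A) {g : ℝ → ℝ}
    (hg : ∀ s, g s = ((1 - ε) * A + 6 * ε ^ 2 * (1 - ε) * K ^ 2 * s
        + ε * (1 - 4 * ε + 6 * ε ^ 2 - 3 * ε ^ 3) * K ^ 4 * s ^ 2)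
        / ((1 - ε) ^ 2 * (1 + ε * K ^ 2 * s) ^ 2)) :
    (∀ s : ℝ, 0 ≤ s → deriv g s < 0) ∧ StrictAntiOn g (Set.Ici 0) := by
  have hε : 0 < ε := by linarith
  have hp : 0 < 1 - ε := sub_pos.2 hε1
  have hq : 0 ≤ (1 - ε) * (ε * K ^ 2) := mul_nonneg hp.le (mul_nonneg hε.le (sq_nonneg K))
  have hconst : (1 - ε) * (6 * ε ^ 2 * (1 - ε) * K ^ 2)
      < 2 * ((1 - ε) * A) * ((1 - ε) * (ε * K ^ 2)) := by
    have : 0 < 2 * ε * (1 - ε) ^ 2 * K ^ 2 * (A - 3 * ε) :=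
      mul_pos (by positivity) (sub_pos.2 hA)
    linarith
  have hlin : 2 * (ε * (1 - 4 * ε + 6 * ε ^ 2 - 3 * ε ^ 3) * K ^ 4) * (1 - ε)
      ≤ 6 * ε ^ 2 * (1 - ε) * K ^ 2 * ((1 - ε) * (ε * K ^ 2)) := by
    have : 0 ≤ 2 * ε * (1 - ε) ^ 2 * K ^ 4 * (3 * ε - 1) :=
      mul_nonneg (by positivity) (by linarith)
    linarith
  obtain rfl : g = fun s ↦ ((1 - ε) * A + 6 * ε ^ 2 * (1 - ε) * K ^ 2 * s
      + ε * (1 - 4 * ε + 6 * ε ^ 2 - 3 * ε ^ 3) * K ^ 4 * s ^ 2)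
      / (1 - ε + (1 - ε) * (ε * K ^ 2) * s) ^ 2 := by
    funext s
    rw [hg, ← mul_pow, mul_add, mul_one, mul_assoc (1 - ε) (ε * K ^ 2)]
  exact ⟨fun s hs ↦ deriv_quadratic_div_affine_sq_neg hp hq hconst hlin hs,
    strictAntiOn_quadratic_div_affine_sq hp hq hconst hlin⟩

/-- If `1/3 ≤ ε < 1/2` and `A > 3/2`, then the kurtosis function
`g(s) = ((1−ε)A + 6ε²(1−ε)K²s + ε(1−4ε+6ε²−3ε³)K⁴s²) / ((1−ε)²(1+εK²s)²)` has
`g′(s) < 0` for all `s ≥ 0`; consequently `g` is strictly decreasing on `[0, 1]`. -/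
theorem kurtosis_function_strictAnti (ε K A : ℝ)
    (hε : 0 < ε) (hε1 : ε < 1) (hK : 0 < K)
    (hε3 : 1 / 3 ≤ ε) (hε2 : ε < 1 / 2) (hA : 3 / 2 < A)
    (g : ℝ → ℝ)
    (hg : ∀ s, g s = ((1 - ε) * A + 6 * ε ^ 2 * (1 - ε) * K ^ 2 * s
        + ε * (1 - 4 * ε + 6 * ε ^ 2 - 3 * ε ^ 3) * K ^ 4 * s ^ 2)
        / ((1 - ε) ^ 2 * (1 + ε * K ^ 2 * s) ^ 2)) :
    (∀ s : ℝ, 0 ≤ s → deriv g s < 0) ∧ StrictAntiOn g (Set.Icc 0 1) :=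
  (kurtosis_function_strictAnti_general hε1 hK.ne' hε3 (by linarith) hg).imp_right
    fun hanti ↦ hanti.mono Set.Icc_subset_Ici_self
end

section
/- Let x₁, …, xₙ ∈ ℝ^p, let Σ be a positive definite p×p real matrix, and set dᵢ(μ) = (xᵢ − μ)ᵀ Σ⁻¹ (xᵢ − μ) for μ ∈ ℝ^p. Let ρ : ℝ → ℝ be differentiable with derivative W = ρ′, let δ ∈ (0,1), and let S : ℝ^p → ℝ be a differentiable function with S(μ) > 0 for all μ that satisfies the M-scale identity (1/n) ∑ᵢ ρ( dᵢ(μ) / S(μ) ) = δ for every μ ∈ ℝ^p. If μ̂ is a local minimum of S, then the location estimating equation ∑ᵢ W( dᵢ(μ̂) / S(μ̂) ) (xᵢ − μ̂) = 0 holds. -/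
open MeasureTheory

/-!
Differentiate the M-scale identity at `μ̂`. Since `μ̂` is a critical point of `S`, the denominators
contribute nothing, and the derivative of the `i`-th argument in direction `v` is
`-2 (xᵢ - μ̂)ᵀ Σ⁻¹ v / S(μ̂)`. The chain rule therefore gives `uᵀ Σ⁻¹ v = 0` for all `v`, where
`u = ∑ᵢ W(dᵢ(μ̂)/S(μ̂)) (xᵢ - μ̂)`, and nondegeneracy of `Σ⁻¹` forces `u = 0`.
-/

section Calculus

variable {𝕜 E F ι : Type*} [NontriviallyNormedField 𝕜] [NormedAddCommGroup E] [NormedSpace 𝕜 E]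
  [NormedAddCommGroup F] [NormedSpace 𝕜 F]

theorem hasFDerivAt_bilinear_sub_self (B : E →L[𝕜] E →L[𝕜] F) (x μ : E) :
    HasFDerivAt (fun ν => B (x - ν) (x - ν)) (-(B + B.flip) (x - μ)) μ := by
  have hsub : HasFDerivAt (fun ν => x - ν) (-ContinuousLinearMap.id 𝕜 E) μ :=
    (hasFDerivAt_id μ).const_sub x
  refine (B.hasFDerivAt_of_bilinear hsub hsub).congr_fderiv ?_
  ext v
  simp [sub_eq_add_neg, add_comm]

theorem hasFDerivAt_div_of_hasFDerivAt_zero {f s : E → 𝕜} {f' : E →L[𝕜] 𝕜} {μ : E}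
    (hf : HasFDerivAt f f' μ) (hs : HasFDerivAt s (0 : E →L[𝕜] 𝕜) μ) (hsμ : s μ ≠ 0) :
    HasFDerivAt (fun ν => f ν / s ν) ((s μ)⁻¹ • f') μ := by
  have hinv : HasFDerivAt (fun ν => (s ν)⁻¹) (0 : E →L[𝕜] 𝕜) μ :=
    ((hasDerivAt_inv hsμ).comp_hasFDerivAt μ hs).congr_fderiv (by ext; simp)
  simp only [div_eq_mul_inv]
  exact (hf.fun_mul hinv).congr_fderiv (by ext; simp)

theorem hasFDerivAt_sum_comp_bilinear_div [Fintype ι] (B : E →L[𝕜] E →L[𝕜] 𝕜) (x : ι → E)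
    {ρ W : 𝕜 → 𝕜} {S : E → 𝕜} {μ : E}
    (hρ : ∀ i, HasDerivAt ρ (W (B (x i - μ) (x i - μ) / S μ)) (B (x i - μ) (x i - μ) / S μ))
    (hS : HasFDerivAt S (0 : E →L[𝕜] 𝕜) μ) (hSμ : S μ ≠ 0) :
    HasFDerivAt (fun ν => ∑ i, ρ (B (x i - ν) (x i - ν) / S ν))
      (-(S μ)⁻¹ • (B + B.flip) (∑ i, W (B (x i - μ) (x i - μ) / S μ) • (x i - μ))) μ := by
  have hterm (i : ι) := (hρ i).comp_hasFDerivAt μ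
    (hasFDerivAt_div_of_hasFDerivAt_zero (hasFDerivAt_bilinear_sub_self B (x i) μ) hS hSμ)
  refine (HasFDerivAt.fun_sum fun i _ => hterm i).congr_fderiv ?_
  simp only [map_sum, map_smul, Finset.smul_sum]
  refine Finset.sum_congr rfl fun i _ => ?_
  rw [smul_neg, smul_neg, neg_smul, smul_comm]

theorem injective_add_flip_of_anisotropic [NeZero (2 : 𝕜)] {B : E →L[𝕜] E →L[𝕜] 𝕜}
    (hB : ∀ u, B u u = 0 → u = 0) : Function.Injective (B + B.flip) := by
  refine (injective_iff_map_eq_zero _).mpr fun u hu => hB u ?_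
  have hdiag : 2 * B u u = 0 := by simpa [two_mul] using DFunLike.congr_fun hu u
  exact (mul_eq_zero.mp hdiag).resolve_left two_ne_zero

-- `B + B.flip` is the polar form of the quadratic form `u ↦ B u u`.
theorem local_min_of_Mscale_satisfies_estimating_equation_general [Fintype ι]
    (B : E →L[𝕜] E →L[𝕜] 𝕜) (hB : Function.Injective (B + B.flip)) (x : ι → E)
    {ρ W : 𝕜 → 𝕜} {S : E → 𝕜} {c : 𝕜} {μ : E}
    (hρ : ∀ i, HasDerivAt ρ (W (B (x i - μ) (x i - μ) / S μ)) (B (x i - μ) (x i - μ) / S μ))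
    (hS : HasFDerivAt S (0 : E →L[𝕜] 𝕜) μ) (hSμ : S μ ≠ 0)
    (hMscale : ∀ᶠ ν in nhds μ, ∑ i, ρ (B (x i - ν) (x i - ν) / S ν) = c) :
    ∑ i, W (B (x i - μ) (x i - μ) / S μ) • (x i - μ) = 0 := by
  have hderiv := hasFDerivAt_sum_comp_bilinear_div B x hρ hS hSμ
  have hzero := hderiv.unique ((hasFDerivAt_const c μ).congr_of_eventuallyEq hMscale)
  have hpolar : (B + B.flip) (∑ i, W (B (x i - μ) (x i - μ) / S μ) • (x i - μ)) = 0 :=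
    (smul_eq_zero_iff_right (neg_ne_zero.mpr (inv_ne_zero hSμ))).mp hzero
  exact (map_eq_zero_iff (B + B.flip) hB).mp hpolar

end Calculus

section Mahalanobis

variable {ι : Type*} [Fintype ι] [DecidableEq ι]

/-- The Mahalanobis bilinear form `(u, v) ↦ uᵀ Σ⁻¹ v` of a scatter matrix `Σ`; its value at
`(x - μ, x - μ)` is the squared Mahalanobis distance. It is bundled as a continuous bilinear map so
that it can be differentiated. For singular `Σ` it is zero, as `Cov⁻¹ = 0` by convention. -/
noncomputable def mahalanobisForm (Cov : Matrix ι ι ℝ) :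
    EuclideanSpace ℝ ι →L[ℝ] EuclideanSpace ℝ ι →L[ℝ] ℝ :=
  (Matrix.toLinearMap₂ (EuclideanSpace.basisFun ι ℝ).toBasis
    (EuclideanSpace.basisFun ι ℝ).toBasis Cov⁻¹).toContinuousBilinearMap

theorem mahalanobisForm_apply (Cov : Matrix ι ι ℝ) (u v : EuclideanSpace ℝ ι) :
    mahalanobisForm Cov u v = ∑ j, ∑ k, u j * Cov⁻¹ j k * v k := by
  simp [mahalanobisForm, Matrix.toLinearMap₂_apply, mul_assoc, mul_comm (v.ofLp _)]

theorem mahalanobisForm_self_pos {Cov : Matrix ι ι ℝ} (hCov : Cov.PosDef)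
    {u : EuclideanSpace ℝ ι} (hu : u ≠ 0) : 0 < mahalanobisForm Cov u u := by
  have hpos := hCov.inv.dotProduct_mulVec_pos (x := u.ofLp) (by simpa using hu)
  simpa [mahalanobisForm_apply, dotProduct, Matrix.mulVec, Finset.mul_sum, mul_assoc] using hpos

end Mahalanobis

/-- Let `x₁, …, xₙ ∈ ℝ^p`, `Σ` positive definite, and `dᵢ(μ) = (xᵢ − μ)ᵀ Σ⁻¹ (xᵢ − μ)`
the squared Mahalanobis distances. Let `ρ` be differentiable with derivative `W`, and
let `S` be a positive differentiable function satisfying the M-scale identity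
`(1/n) ∑ᵢ ρ(dᵢ(μ)/S(μ)) = δ` for all `μ`. If `μ̂` is a local minimum of `S`, then the
location estimating equation `∑ᵢ W(dᵢ(μ̂)/S(μ̂)) (xᵢ − μ̂) = 0` holds. -/
theorem local_min_of_Mscale_satisfies_estimating_equation {p n : ℕ} (hn : 0 < n)
    (x : Fin n → EuclideanSpace ℝ (Fin p))
    (Cov : Matrix (Fin p) (Fin p) ℝ) (hCov : Cov.PosDef)
    (d : EuclideanSpace ℝ (Fin p) → Fin n → ℝ)
    (hd : ∀ μ i, d μ i = ∑ j, ∑ k, (x i j - μ j) * Cov⁻¹ j k * (x i k - μ k))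
    (ρ W : ℝ → ℝ) (hρ : ∀ t, HasDerivAt ρ (W t) t)
    (δ : ℝ) (hδ : δ ∈ Set.Ioo (0 : ℝ) 1)
    (S : EuclideanSpace ℝ (Fin p) → ℝ) (hS : Differentiable ℝ S)
    (hSpos : ∀ μ, 0 < S μ)
    (hMscale : ∀ μ, (1 / n : ℝ) * ∑ i, ρ (d μ i / S μ) = δ)
    (μhat : EuclideanSpace ℝ (Fin p)) (hmin : IsLocalMin S μhat) :
    ∑ i, W (d μhat i / S μhat) • (x i - μhat) = 0 := by
  have hd' (μ i) : d μ i = mahalanobisForm Cov (x i - μ) (x i - μ) := by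
    simp only [hd, mahalanobisForm_apply, PiLp.sub_apply]
  have hanisotropic (u) (hu : mahalanobisForm Cov u u = 0) : u = 0 :=
    of_not_not fun hne => (mahalanobisForm_self_pos hCov hne).ne' hu
  have hcritical : HasFDerivAt S 0 μhat := hmin.fderiv_eq_zero ▸ (hS μhat).hasFDerivAt
  have hsum (μ) : ∑ i, ρ (d μ i / S μ) = n * δ := by
    rw [← hMscale μ]
    field_simp
  simp only [hd'] at hsum ⊢
  exact local_min_of_Mscale_satisfies_estimating_equation_general (mahalanobisForm Cov)
    (injective_add_flip_of_anisotropic hanisotropic) x (fun _ => hρ _) hcritical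
    (hSpos μhat).ne' (.of_forall hsum)
end
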